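/- arXiv:1207.3262 — 3 statements merged into one kernel-verified Lean document; each statement's English description precedes it below -/
import Mathlib

section
/- Every ground term is AC-equal to its canonical form: fix a linear order ⊴ on ground terms; then for every ground term t, can_AC(t) =_AC t. -/
/-- Ground terms over uninterpreted symbols `F` (with arities `ar`) and AC symbols `U`:
`app f ts` applies `f : F` to a tuple of `ar f` terms, `node u t₁ t₂` is `u(t₁,t₂)`. -/
inductive T (F : Type) (ar : F → ℕ) (U : Type) : Type where
  | app : (f : F) → (Fin (ar f) → T F ar U) → T F ar U
  | node : U → T F ar U → T F ar U → T F ar U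

variable (F : Type) (ar : F → ℕ) (U : Type)

/-- `EqACE E s t` : the smallest congruence on ground terms containing AC-equalities
(commutativity and associativity of every AC symbol) and the pairs of `E`. -/
inductive EqACE (E : Set (T F ar U × T F ar U)) : T F ar U → T F ar U → Prop where
  | ax : ∀ {s t : T F ar U}, (s, t) ∈ E → EqACE E s t
  | refl : ∀ t : T F ar U, EqACE E t t
  | symm : ∀ {s t : T F ar U}, EqACE E s t → EqACE E t s
  | trans : ∀ {s t w : T F ar U}, EqACE E s t → EqACE E t w → EqACE E s w
  | congr_app : ∀ (f : F) (ts ts' : Fin (ar f) → T F ar U),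
      (∀ i, EqACE E (ts i) (ts' i)) → EqACE E (.app f ts) (.app f ts')
  | congr_node : ∀ (u : U) {s₁ t₁ s₂ t₂ : T F ar U}, EqACE E s₁ t₁ → EqACE E s₂ t₂ →
      EqACE E (.node u s₁ s₂) (.node u t₁ t₂)
  | comm : ∀ (u : U) (x y : T F ar U), EqACE E (.node u x y) (.node u y x)
  | assoc : ∀ (u : U) (x y z : T F ar U),
      EqACE E (.node u x (.node u y z)) (.node u (.node u x y) z)

/-- AC-equality `=_AC`: the smallest congruence containing the AC axioms. -/
abbrev ACeq : T F ar U → T F ar U → Prop := EqACE F ar U ∅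

open Classical in
/-- The multiset `𝒜_u(t)` of `u`-aliens of a term `t`. -/
noncomputable def aliens (u : U) : T F ar U → Multiset (T F ar U)
  | .node u' t₁ t₂ => if u' = u then aliens u t₁ + aliens u t₂ else {T.node u' t₁ t₂}
  | .app f ts => {T.app f ts}

/-- `comb1 u s₁ [s₂,…,sₙ]` is the right comb `u(s₁, u(s₂, …, u(s_{n-1}, sₙ)…))`. -/
def comb1 (u : U) : T F ar U → List (T F ar U) → T F ar U
  | t, [] => t
  | t, s :: ss => .node u t (comb1 u s ss)

/-- The AC canonizer `can_AC` (w.r.t. the fixed linear order `⊴` on terms): under each AC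
symbol `u` it collects the `u`-aliens of the canonized arguments, sorts them w.r.t. `⊴`
and rebuilds a right comb.  (The `[]` branch is unreachable: the multiset of aliens always
has at least two elements.) -/
noncomputable def canAC [LinearOrder (T F ar U)] : T F ar U → T F ar U
  | .app f ts => .app f (fun i => canAC (ts i))
  | .node u t₁ t₂ =>
      match (aliens F ar U u (canAC t₁) + aliens F ar U u (canAC t₂)).sort (· ≤ ·) with
      | [] => .node u (canAC t₁) (canAC t₂)
      | s :: ss => comb1 F ar U u s ss

/-!
For a fixed AC symbol `u`, the classes of ground terms form a commutative semigroup under `u`. In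
it, the class of `t` is the product of the classes of its `u`-aliens, and the class of a right comb
is the product of the classes of its leaves. A product in a commutative semigroup depends only on
the multiset of its factors, so `t` is AC-equal to any right comb enumerating its `u`-aliens, in
particular to the sorted one that `canAC` builds.
-/

section

variable {F ar U}

section Homomorphism

variable {M : Type*} {u : U} {φ : T F ar U → M}

theorem prod_map_aliens [CommMonoid M] (hφ : ∀ s t, φ (.node u s t) = φ s * φ t)
    (t : T F ar U) : ((aliens F ar U u t).map φ).prod = φ t := by
  induction t with
  | app f ts => rw [aliens, Multiset.map_singleton, Multiset.prod_singleton]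
  | node v t₁ t₂ ih₁ ih₂ =>
    by_cases hv : v = u
    · subst hv
      rw [aliens, if_pos rfl, Multiset.map_add, Multiset.prod_add, ih₁, ih₂, hφ]
    · rw [aliens, if_neg hv, Multiset.map_singleton, Multiset.prod_singleton]

theorem prod_map_cons_eq_comb1 [Monoid M] (hφ : ∀ s t, φ (.node u s t) = φ s * φ t)
    (s : T F ar U) (ss : List (T F ar U)) :
    ((s :: ss).map φ).prod = φ (comb1 F ar U u s ss) := by
  induction ss generalizing s with
  | nil => rw [List.map_singleton, List.prod_singleton, comb1]
  | cons s' ss ih => rw [List.map_cons, List.prod_cons, ih, comb1, hφ]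

end Homomorphism

namespace EqACE

/-- The equivalence relation `EqACE E`, bundled so that ground terms can be quotiented by it. -/
def setoid (E : Set (T F ar U × T F ar U)) : Setoid (T F ar U) where
  r := EqACE F ar U E
  iseqv := ⟨.refl, .symm, .trans⟩

/-- The commutative semigroup of ground terms modulo `EqACE E`, with multiplication given by the
AC symbol `u`. The underlying quotient does not depend on `u`; the parameter selects the
multiplication. -/
def NodeSemigroup (E : Set (T F ar U × T F ar U)) (_u : U) : Type :=
  Quotient (setoid E)

variable (E : Set (T F ar U × T F ar U)) (u : U)

instance : CommSemigroup (NodeSemigroup E u) where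
  mul := Quotient.map₂ (.node u) fun _ _ h₁ _ _ h₂ => .congr_node u h₁ h₂
  mul_assoc := by
    rintro ⟨x⟩ ⟨y⟩ ⟨z⟩
    exact Quotient.sound (.symm (.assoc u x y z))
  mul_comm := by
    rintro ⟨x⟩ ⟨y⟩
    exact Quotient.sound (.comm u x y)

/-- The class of a ground term in `NodeSemigroup E u`. A unit is adjoined so that products over
multisets are available. -/
def nodeClass (t : T F ar U) : WithOne (NodeSemigroup E u) :=
  WithOne.coe (Quotient.mk (setoid E) t)

theorem nodeClass_node (s t : T F ar U) :
    nodeClass E u (.node u s t) = nodeClass E u s * nodeClass E u t :=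
  rfl

variable {E u}

theorem nodeClass_inj {s t : T F ar U} :
    nodeClass E u s = nodeClass E u t ↔ EqACE F ar U E s t :=
  WithOne.coe_inj.trans Quotient.eq

theorem comb1_of_coe_eq_aliens {s t : T F ar U} {ss : List (T F ar U)}
    (h : ((s :: ss : List (T F ar U)) : Multiset (T F ar U)) = aliens F ar U u t) :
    EqACE F ar U E (comb1 F ar U u s ss) t := by
  have hnode := nodeClass_node E u
  refine (nodeClass_inj (u := u)).mp ?_
  calc nodeClass E u (comb1 F ar U u s ss)
    _ = ((s :: ss).map (nodeClass E u)).prod := (prod_map_cons_eq_comb1 hnode s ss).symm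
    _ = ((aliens F ar U u t).map (nodeClass E u)).prod := by
      rw [← h, Multiset.map_coe, Multiset.prod_coe]
    _ = nodeClass E u t := prod_map_aliens hnode t

end EqACE

theorem acEq_canAC_node [LinearOrder (T F ar U)] (u : U) (t₁ t₂ : T F ar U) :
    ACeq F ar U (canAC F ar U (.node u t₁ t₂))
      (.node u (canAC F ar U t₁) (canAC F ar U t₂)) := by
  rw [canAC]
  split
  case h_1 => exact .refl _
  case h_2 s ss hsort =>
    refine EqACE.comb1_of_coe_eq_aliens ?_
    rw [← hsort, Multiset.sort_eq, aliens, if_pos rfl]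

end

/-- Every ground term is AC-equal to its canonical form. -/
theorem stmt2 [LinearOrder (T F ar U)] (t : T F ar U) :
    ACeq F ar U (canAC F ar U t) t := by
  induction t with
  | app f ts ih => exact .congr_app f _ _ ih
  | node u t₁ t₂ ih₁ ih₂ => exact .trans (acEq_canAC_node u t₁ t₂) (.congr_node u ih₁ ih₂)
end

section
/- Idempotence of the AC canonizer: fix a linear order ⊴ on ground terms; then for every ground term t, can_AC(can_AC(t)) = can_AC(t). -/
variable (F : Type) (ar : F → ℕ) (U : Type)

section CanonicalTerms

variable {F : Type} {ar : F → ℕ} {U : Type} {u v : U} {a t : T F ar U}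

/-- A term is a `u`-alien if its head symbol is not the AC symbol `u`. -/
def T.IsAlien (u : U) (t : T F ar U) : Prop :=
  ∀ t₁ t₂, t ≠ .node u t₁ t₂

lemma T.isAlien_app (u : U) (f : F) (ts : Fin (ar f) → T F ar U) :
    (T.app f ts).IsAlien u :=
  nofun

lemma T.isAlien_node_of_ne (hvu : v ≠ u) (t₁ t₂ : T F ar U) : (T.node v t₁ t₂).IsAlien u := by
  rintro _ _ ⟨⟩
  exact hvu rfl

lemma aliens_node_self (u : U) (t₁ t₂ : T F ar U) :
    aliens F ar U u (.node u t₁ t₂) = aliens F ar U u t₁ + aliens F ar U u t₂ := by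
  rw [aliens, if_pos rfl]

lemma T.IsAlien.aliens_eq_singleton (ht : t.IsAlien u) : aliens F ar U u t = {t} := by
  cases t with
  | app f ts => rw [aliens]
  | node v t₁ t₂ =>
    have hvu : v ≠ u := by
      rintro rfl
      exact ht t₁ t₂ rfl
    rw [aliens, if_neg hvu]

lemma T.isAlien_of_mem_aliens (ha : a ∈ aliens F ar U u t) : a.IsAlien u := by
  induction t with
  | app f ts =>
    have hts := T.isAlien_app u f ts
    rw [hts.aliens_eq_singleton, Multiset.mem_singleton] at ha
    rwa [ha]
  | node v t₁ t₂ ih₁ ih₂ =>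
    by_cases hvu : v = u
    · rw [hvu, aliens_node_self, Multiset.mem_add] at ha
      exact ha.elim ih₁ ih₂
    · have hnode := T.isAlien_node_of_ne hvu t₁ t₂
      rw [hnode.aliens_eq_singleton, Multiset.mem_singleton] at ha
      rwa [ha]

lemma card_aliens_pos (u : U) (t : T F ar U) : 0 < (aliens F ar U u t).card := by
  induction t with
  | app f ts => simp [(T.isAlien_app u f ts).aliens_eq_singleton]
  | node v t₁ t₂ ih₁ _ =>
    by_cases hvu : v = u
    · rw [hvu, aliens_node_self, Multiset.card_add]
      exact Nat.add_pos_left ih₁ _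
    · simp [(T.isAlien_node_of_ne hvu t₁ t₂).aliens_eq_singleton]

lemma two_le_card_aliens_node (u : U) (t₁ t₂ : T F ar U) :
    2 ≤ (aliens F ar U u (.node u t₁ t₂)).card := by
  rw [aliens_node_self, Multiset.card_add]
  exact Nat.add_le_add (card_aliens_pos u t₁) (card_aliens_pos u t₂)

lemma aliens_comb1 {s : T F ar U} {ss : List (T F ar U)} (halien : ∀ a ∈ s :: ss, a.IsAlien u) :
    aliens F ar U u (comb1 F ar U u s ss) = ↑(s :: ss) := by
  induction ss generalizing s with
  | nil => simpa [comb1] using (halien s List.mem_cons_self).aliens_eq_singleton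
  | cons s' ss ih =>
    obtain ⟨hs, hss⟩ := List.forall_mem_cons.1 halien
    rw [comb1, aliens_node_self, hs.aliens_eq_singleton, ih hss, Multiset.singleton_add,
      Multiset.cons_coe]

variable [LinearOrder (T F ar U)]

lemma exists_sort_aliens_node_eq_cons_cons (u : U) (t₁ t₂ : T F ar U) :
    ∃ s s' ss, (aliens F ar U u (.node u t₁ t₂)).sort (· ≤ ·) = s :: s' :: ss := by
  have hlength := two_le_card_aliens_node u t₁ t₂
  rw [← Multiset.length_sort (r := (· ≤ ·))] at hlength
  match (aliens F ar U u (.node u t₁ t₂)).sort (· ≤ ·), hlength with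
  | s :: s' :: ss, _ => exact ⟨s, s', ss, rfl⟩

lemma canAC_node_of_sort_eq_cons {t₁ t₂ s : T F ar U} {ss : List (T F ar U)}
    (h : (aliens F ar U u (.node u (canAC F ar U t₁) (canAC F ar U t₂))).sort (· ≤ ·) = s :: ss) :
    canAC F ar U (.node u t₁ t₂) = comb1 F ar U u s ss := by
  rw [aliens_node_self] at h
  rw [canAC, h]

lemma canAC_comb1 {s : T F ar U} {ss : List (T F ar U)}
    (hsorted : (s :: ss).Pairwise (· ≤ ·)) (halien : ∀ a ∈ s :: ss, a.IsAlien u)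
    (hfixed : ∀ a ∈ s :: ss, canAC F ar U a = a) :
    canAC F ar U (comb1 F ar U u s ss) = comb1 F ar U u s ss := by
  induction ss generalizing s with
  | nil => exact hfixed s List.mem_cons_self
  | cons s' ss ih =>
    obtain ⟨hs, hss⟩ := List.forall_mem_cons.1 hfixed
    have hcomb := ih hsorted.tail (List.forall_mem_cons.1 halien).2 hss
    have hsort : (aliens F ar U u (comb1 F ar U u s (s' :: ss))).sort (· ≤ ·) = s :: s' :: ss := by
      rw [aliens_comb1 halien, Multiset.coe_sort]
      exact List.mergeSort_eq_self _ hsorted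
    refine canAC_node_of_sort_eq_cons ?_
    rwa [hs, hcomb]

/-- The canonical terms, intrinsically characterizing the values of the canonizer: applications to
canonical arguments, and right combs over a sorted list of canonical `u`-aliens. The list is written
`s :: s' :: ss` because a comb over a single term does not have head symbol `u`. -/
inductive T.IsCanonical : T F ar U → Prop where
  | app {f : F} {ts : Fin (ar f) → T F ar U} (hts : ∀ i, (ts i).IsCanonical) :
      (T.app f ts).IsCanonical
  | comb {u : U} {s s' : T F ar U} {ss : List (T F ar U)}
      (hsorted : (s :: s' :: ss).Pairwise (· ≤ ·)) (halien : ∀ a ∈ s :: s' :: ss, a.IsAlien u)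
      (hcanonical : ∀ a ∈ s :: s' :: ss, a.IsCanonical) :
      (comb1 F ar U u s (s' :: ss)).IsCanonical

lemma T.IsCanonical.canAC_eq (ht : t.IsCanonical) : canAC F ar U t = t := by
  induction ht with
  | app _ ih => rw [canAC, funext ih]
  | comb hsorted halien _ ih => exact canAC_comb1 hsorted halien ih

lemma T.IsCanonical.of_mem_aliens (ht : t.IsCanonical) (ha : a ∈ aliens F ar U u t) :
    a.IsCanonical := by
  by_cases htu : t.IsAlien u
  · rw [htu.aliens_eq_singleton, Multiset.mem_singleton] at ha
    rwa [ha]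
  · cases ht with
    | app => exact absurd (T.isAlien_app u _ _) htu
    | @comb v s s' ss _ halien hcanonical =>
      obtain rfl : v = u := by_contra fun hvu => htu (T.isAlien_node_of_ne hvu _ _)
      rw [aliens_comb1 halien] at ha
      exact hcanonical a ha

lemma T.isCanonical_canAC (t : T F ar U) : (canAC F ar U t).IsCanonical := by
  induction t with
  | app f ts ih =>
    rw [canAC]
    exact .app ih
  | node u t₁ t₂ ih₁ ih₂ =>
    obtain ⟨s, s', ss, hsort⟩ :=
      exists_sort_aliens_node_eq_cons_cons u (canAC F ar U t₁) (canAC F ar U t₂)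
    have hmem (a : T F ar U) (ha : a ∈ s :: s' :: ss) :
        a ∈ aliens F ar U u (.node u (canAC F ar U t₁) (canAC F ar U t₂)) := by
      rwa [← hsort, Multiset.mem_sort] at ha
    rw [canAC_node_of_sort_eq_cons hsort]
    refine .comb (hsort ▸ Multiset.pairwise_sort _ _)
      (fun a ha => T.isAlien_of_mem_aliens (hmem a ha)) fun a ha => ?_
    have ha' := hmem a ha
    rw [aliens_node_self, Multiset.mem_add] at ha'
    exact ha'.elim ih₁.of_mem_aliens ih₂.of_mem_aliens

end CanonicalTerms

/-- Idempotence of the AC canonizer. -/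
theorem stmt3 [LinearOrder (T F ar U)] (t : T F ar U) :
    canAC F ar U (canAC F ar U t) = canAC F ar U t :=
  (T.isCanonical_canAC t).canAC_eq
end

section
/- Soundness of AC critical pairs (soundness of the Deduce rule): let u be an AC symbol and a, b, b', l, r, l', r' be ground terms such that l =_AC u(a,b) and l' =_AC u(a,b'). Then u(b,r') =_{AC∪{(l,r),(l',r')}} u(b',r), i.e. the two sides of the critical pair are equal in the smallest congruence on ground terms containing AC-equality and the pairs (l,r) and (l',r'). -/
variable (F : Type) (ar : F → ℕ) (U : Type)

section

variable {F : Type} {ar : F → ℕ} {U : Type} {E E' : Set (T F ar U × T F ar U)}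

instance : IsTrans (T F ar U) (EqACE F ar U E) := ⟨fun _ _ _ => .trans⟩

theorem EqACE.mono (hE : E ⊆ E') {s t : T F ar U} (h : EqACE F ar U E s t) :
    EqACE F ar U E' s t := by
  induction h with
  | ax h => exact .ax (hE h)
  | refl t => exact .refl t
  | symm _ ih => exact .symm ih
  | trans _ _ ih₁ ih₂ => exact .trans ih₁ ih₂
  | congr_app f ts ts' _ ih => exact .congr_app f ts ts' ih
  | congr_node u _ _ ih₁ ih₂ => exact .congr_node u ih₁ ih₂
  | comm u x y => exact .comm u x y
  | assoc u x y z => exact .assoc u x y z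

theorem ACeq.eqACE {s t : T F ar U} (h : ACeq F ar U s t) : EqACE F ar U E s t :=
  EqACE.mono (Set.empty_subset E) h

theorem EqACE.node_swap_outer (u : U) (x y z : T F ar U) :
    EqACE F ar U E (.node u x (.node u y z)) (.node u z (.node u y x)) :=
  calc
    EqACE F ar U E (.node u x (.node u y z)) (.node u (.node u x y) z) := .assoc u x y z
    EqACE F ar U E _ (.node u z (.node u x y)) := .comm u _ z
    EqACE F ar U E _ (.node u z (.node u y x)) := .congr_node u (.refl z) (.comm u x y)

theorem EqACE.critical_pair {u : U} {a b b' r r' : T F ar U}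
    (hr : EqACE F ar U E r (.node u a b)) (hr' : EqACE F ar U E r' (.node u a b')) :
    EqACE F ar U E (.node u b r') (.node u b' r) :=
  calc
    EqACE F ar U E (.node u b r') (.node u b (.node u a b')) := .congr_node u (.refl b) hr'
    EqACE F ar U E _ (.node u b' (.node u a b)) := .node_swap_outer u b a b'
    EqACE F ar U E _ (.node u b' r) := .congr_node u (.refl b') hr.symm

end

/-- Soundness of AC critical pairs (soundness of the `Deduce` rule). -/
theorem stmt6 (u : U) (a b b' l r l' r' : T F ar U)
    (h : ACeq F ar U l (.node u a b)) (h' : ACeq F ar U l' (.node u a b')) :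
    EqACE F ar U {(l, r), (l', r')} (.node u b r') (.node u b' r) := by
  have hlr : EqACE F ar U {(l, r), (l', r')} l r := .ax (Set.mem_insert _ _)
  have hlr' : EqACE F ar U {(l, r), (l', r')} l' r' := .ax (Set.mem_insert_of_mem _ rfl)
  exact .critical_pair (hlr.symm.trans (ACeq.eqACE h)) (hlr'.symm.trans (ACeq.eqACE h'))
end
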